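/- Let (C,p,Q) be a Brascamp–Lieb datum, let B = (B_j)_{j=1}^m be symmetric matrices with 0 < B_j ≤ Q_j, and set M = ∑_{j=1}^m p_j C_jᵀ B_j C_j (which is positive definite). The following are equivalent: (a) B is a global extremizer, i.e. BL(C,p,Q)² = ∏_{j=1}^m det(B_j)^{p_j} / det(M); (b) B is a local maximizer of the function (A_j)_j ↦ ∏ⱼ det(A_j)^{p_j} / det(∑ⱼ p_j C_jᵀ A_j C_j) on the set of tuples of symmetric matrices with 0 < A_j ≤ Q_j; (c) B_j^{-1} ≥ C_j M^{-1} C_jᵀ and (B_j^{-1} − C_j M^{-1} C_jᵀ)(Q_j − B_j) = 0 for every j; (d) the datum with maps C'_j = B_j^{1/2} C_j M^{-1/2}, exponents p, and matrices Q'_j = B_j^{-1/2} Q_j B_j^{-1/2} is a generalized geometric Brascamp–Lieb datum. -/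

import Mathlib

open MeasureTheory Matrix
open scoped ENNReal

noncomputable section

/-- The regularized Brascamp–Lieb constant of a datum `(C, p, Q)`. -/
def BLconst {n m : ℕ} {ni : Fin m → ℕ} (C : ∀ i, Matrix (Fin (ni i)) (Fin n) ℝ)
    (p : Fin m → ℝ) (Q : ∀ i, Matrix (Fin (ni i)) (Fin (ni i)) ℝ) : ℝ≥0∞ :=
  ⨆ (B : ∀ i, Matrix (Fin (ni i)) (Fin (ni i)) ℝ)
    (_ : ∀ i, (B i).PosDef ∧ (Q i - B i).PosSemidef),
    ((∏ i, ENNReal.ofReal ((B i).det) ^ p i) /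
        ENNReal.ofReal ((∑ i, p i • ((C i)ᵀ * B i * C i)).det)) ^ ((2 : ℝ)⁻¹)

/-- A generalized geometric Brascamp–Lieb datum. -/
def GeometricDatum {n m : ℕ} {ni : Fin m → ℕ} (C : ∀ j, Matrix (Fin (ni j)) (Fin n) ℝ)
    (p : Fin m → ℝ) (Q : ∀ j, Matrix (Fin (ni j)) (Fin (ni j)) ℝ) : Prop :=
  (∀ j, ((1 : Matrix (Fin (ni j)) (Fin (ni j)) ℝ) - C j * (C j)ᵀ).PosSemidef) ∧
    (∀ j, (Q j - 1).PosSemidef) ∧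
    (∀ j, ((1 : Matrix (Fin (ni j)) (Fin (ni j)) ℝ) - C j * (C j)ᵀ) * (Q j - 1) = 0) ∧
    (∑ j, p j • ((C j)ᵀ * C j) = 1)

open scoped MatrixOrder in
theorem Matrix.PosSemidef.exists_transpose_mul_self {ι : Type*} [Fintype ι] [DecidableEq ι]
    {A : Matrix ι ι ℝ} (hA : A.PosSemidef) : ∃ E : Matrix ι ι ℝ, A = Eᵀ * E := by
  obtain ⟨E, hE⟩ := CStarAlgebra.nonneg_iff_eq_star_mul_self.mp hA.nonneg
  exact ⟨E, by simpa [star_eq_conjTranspose, conjTranspose_eq_transpose_of_trivial] using hE⟩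

theorem trace_mul_nonneg_of_posSemidef {ι : Type*} [Fintype ι] [DecidableEq ι]
    {P S : Matrix ι ι ℝ} (hP : P.PosSemidef) (hS : S.PosSemidef) : 0 ≤ (P * S).trace := by
  obtain ⟨E, rfl⟩ := hP.exists_transpose_mul_self
  have h := (hS.mul_mul_conjTranspose_same E).trace_nonneg
  rwa [conjTranspose_eq_transpose_of_trivial, trace_mul_comm, ← Matrix.mul_assoc] at h

theorem mul_eq_zero_of_posSemidef_of_trace_mul_eq_zero {ι : Type*} [Fintype ι] [DecidableEq ι]
    {P S : Matrix ι ι ℝ} (hP : P.PosSemidef) (hS : S.PosSemidef) (h : (P * S).trace = 0) :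
    P * S = 0 := by
  obtain ⟨E, rfl⟩ := hP.exists_transpose_mul_self
  obtain ⟨D, rfl⟩ := hS.exists_transpose_mul_self
  have h1 : ((E * Dᵀ)ᴴ * (E * Dᵀ)).trace = 0 := by
    rw [conjTranspose_eq_transpose_of_trivial, transpose_mul, transpose_transpose,
      Matrix.mul_assoc, trace_mul_comm, ← h]
    simp only [Matrix.mul_assoc]
  rw [trace_conjTranspose_mul_self_eq_zero_iff] at h1
  rw [Matrix.mul_assoc, ← Matrix.mul_assoc E, h1]
  simp

theorem Matrix.PosDef.exists_diagonalization {ι : Type*} [Fintype ι] [DecidableEq ι]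
    {A : Matrix ι ι ℝ} (hA : A.PosDef) :
    ∃ (U : Matrix ι ι ℝ) (d : ι → ℝ), Uᵀ * U = 1 ∧ U * Uᵀ = 1 ∧
      A = U * diagonal d * Uᵀ ∧ (∀ i, 0 < d i) ∧ A.det = ∏ i, d i := by
  refine ⟨hA.1.eigenvectorUnitary, hA.1.eigenvalues, ?_, ?_, ?_, hA.eigenvalues_pos, ?_⟩
  · have := Unitary.coe_star_mul_self hA.1.eigenvectorUnitary
    simpa [star_eq_conjTranspose, conjTranspose_eq_transpose_of_trivial] using this
  · have := Unitary.coe_mul_star_self hA.1.eigenvectorUnitary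
    simpa [star_eq_conjTranspose, conjTranspose_eq_transpose_of_trivial] using this
  · have := hA.1.spectral_theorem
    rw [Unitary.conjStarAlgAut_apply] at this
    simpa [star_eq_conjTranspose, conjTranspose_eq_transpose_of_trivial,
      Function.comp_def] using this
  · simpa using hA.1.det_eq_prod_eigenvalues

open scoped MatrixOrder in
theorem Matrix.PosDef.exists_posDef_mul_self {ι : Type*} [Fintype ι] [DecidableEq ι]
    {A : Matrix ι ι ℝ} (hA : A.PosDef) : ∃ R : Matrix ι ι ℝ, R.PosDef ∧ R * R = A := by
  have h : CFC.sqrt A * CFC.sqrt A = A := CFC.sqrt_mul_sqrt_self A hA.posSemidef.nonneg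
  have hs : (CFC.sqrt A).PosSemidef := (CFC.sqrt_nonneg A).posSemidef
  refine ⟨CFC.sqrt A, hs.posDef_iff_det_ne_zero.mpr fun h0 => hA.det_pos.ne' ?_, h⟩
  rw [← h, det_mul, h0, zero_mul]

theorem posDef_sum_smul_transpose_mul_mul {n m : ℕ} {ni : Fin m → ℕ}
    {C : ∀ j, Matrix (Fin (ni j)) (Fin n) ℝ}
    (hker : ∀ x : Fin n → ℝ, (∀ j, (C j).mulVec x = 0) → x = 0)
    {p : Fin m → ℝ} (hp : ∀ j, 0 < p j)
    {A : ∀ j, Matrix (Fin (ni j)) (Fin (ni j)) ℝ} (hA : ∀ j, (A j).PosDef) :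
    (∑ j, p j • ((C j)ᵀ * A j * C j)).PosDef := by
  have hterm : ∀ j, (p j • ((C j)ᵀ * A j * C j)).PosSemidef := fun j => by
    have := (hA j).posSemidef.conjTranspose_mul_mul_same (C j)
    rw [conjTranspose_eq_transpose_of_trivial] at this
    exact this.smul (hp j).le
  have hq : ∀ j (x : Fin n → ℝ), x ⬝ᵥ ((p j • ((C j)ᵀ * A j * C j)) *ᵥ x) =
      p j * ((C j *ᵥ x) ⬝ᵥ (A j *ᵥ (C j *ᵥ x))) := fun j x => by
    rw [smul_mulVec, dotProduct_smul, smul_eq_mul, ← mulVec_mulVec, ← mulVec_mulVec,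
      dotProduct_mulVec, vecMul_transpose]
  refine PosDef.of_dotProduct_mulVec_pos
    (posSemidef_sum Finset.univ fun j _ => hterm j).isHermitian fun x hx => ?_
  obtain ⟨j, hj⟩ : ∃ j, C j *ᵥ x ≠ 0 := by
    by_contra! h
    exact hx (hker x h)
  rw [star_trivial, sum_mulVec, dotProduct_sum]
  refine Finset.sum_pos' (fun i _ => ?_) ⟨j, Finset.mem_univ j, ?_⟩
  · simpa using (hterm i).dotProduct_mulVec_nonneg x
  · rw [hq]
    exact mul_pos (hp j) (by simpa using (hA j).dotProduct_mulVec_pos hj)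

theorem hasDerivAt_det_one_add_smul {ι : Type*} [Fintype ι] [DecidableEq ι]
    (K : Matrix ι ι ℝ) : HasDerivAt (fun t : ℝ => (1 + t • K).det) K.trace 0 := by
  set q := (det (1 + (Polynomial.X : Polynomial ℝ) • K.map Polynomial.C)).divX.divX
  have h1 : HasDerivAt (fun t : ℝ => 1 + K.trace * t) K.trace 0 := by
    simpa using ((hasDerivAt_id (0 : ℝ)).const_mul K.trace).const_add 1
  have h2 := (q.hasDerivAt 0).mul (hasDerivAt_pow 2 (0 : ℝ))
  refine HasDerivAt.congr_deriv ((h1.add h2).congr_of_eventuallyEq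
    (Filter.Eventually.of_forall fun t => det_one_add_smul t K)) ?_
  simp

theorem HasDerivAt.nonpos_of_eventually_le {g : ℝ → ℝ} {g' a : ℝ} (h : HasDerivAt g g' a)
    (hle : ∀ᶠ t in nhdsWithin a (Set.Ioi a), g t ≤ g a) : g' ≤ 0 := by
  have ht := (hasDerivWithinAt_iff_tendsto_slope' (by simp)).mp
    (h.hasDerivWithinAt (s := Set.Ioi a))
  refine le_of_tendsto ht ?_
  filter_upwards [hle, self_mem_nhdsWithin] with t h1 h2
  rw [slope_def_field]
  exact div_nonpos_of_nonpos_of_nonneg (sub_nonpos.mpr h1) (sub_nonneg.mpr (le_of_lt h2))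

theorem sum_mul_log_le_log_sum {ι : Type*} [Fintype ι] {w z : ι → ℝ}
    (hw : ∀ i, 0 ≤ w i) (hw1 : ∑ i, w i = 1) (hz : ∀ i, 0 < z i) :
    ∑ i, w i * Real.log (z i) ≤ Real.log (∑ i, w i * z i) := by
  simpa using strictConcaveOn_log_Ioi.concaveOn.le_map_sum (t := Finset.univ)
    (fun i _ => hw i) hw1 (fun i _ => hz i)

theorem GeometricDatum.sum_mul_log_det_le {n m : ℕ} {ni : Fin m → ℕ}
    {C : ∀ j, Matrix (Fin (ni j)) (Fin n) ℝ} {p : Fin m → ℝ}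
    {Q : ∀ j, Matrix (Fin (ni j)) (Fin (ni j)) ℝ} (hp : ∀ j, 0 < p j)
    (hG : GeometricDatum C p Q) {A : ∀ j, Matrix (Fin (ni j)) (Fin (ni j)) ℝ}
    (hA : ∀ j, (A j).PosDef ∧ (Q j - A j).PosSemidef)
    (hN : (∑ j, p j • ((C j)ᵀ * A j * C j)).PosDef) :
    ∑ j, p j * Real.log (A j).det ≤ Real.log (∑ j, p j • ((C j)ᵀ * A j * C j)).det := by
  obtain ⟨hP, -, hPQ, hsum⟩ := hG
  obtain ⟨V, lam, hVV, hVV', hNV, hlam, hNdet⟩ := hN.exists_diagonalization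
  choose U a hUU hUU' hAU ha hAdet using fun j => (hA j).1.exists_diagonalization
  let W : ∀ j, Matrix (Fin (ni j)) (Fin n) ℝ := fun j => (U j)ᵀ * C j * V
  have hWW : ∑ j, p j • ((W j)ᵀ * W j) = 1 := by
    have h : ∀ j, p j • ((W j)ᵀ * W j) = Vᵀ * (p j • ((C j)ᵀ * C j)) * V := fun j => by
      rw [Matrix.mul_smul, Matrix.smul_mul]
      congr 1
      calc (W j)ᵀ * W j = Vᵀ * ((C j)ᵀ * (U j * (U j)ᵀ) * C j) * V := by
            simp only [W, transpose_mul, transpose_transpose, Matrix.mul_assoc]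
        _ = _ := by rw [hUU' j, Matrix.mul_one]
    rw [Finset.sum_congr rfl fun j _ => h j, ← Finset.sum_mul, ← Finset.mul_sum, hsum,
      Matrix.mul_one, hVV]
  have hWD : ∑ j, p j • ((W j)ᵀ * diagonal (a j) * W j) = diagonal lam := by
    have h : ∀ j, p j • ((W j)ᵀ * diagonal (a j) * W j) =
        Vᵀ * (p j • ((C j)ᵀ * A j * C j)) * V := fun j => by
      rw [Matrix.mul_smul, Matrix.smul_mul, hAU j]
      simp only [W, transpose_mul, transpose_transpose, Matrix.mul_assoc]
    rw [Finset.sum_congr rfl fun j _ => h j, ← Finset.sum_mul, ← Finset.mul_sum, hNV]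
    calc Vᵀ * (V * diagonal lam * Vᵀ) * V = (Vᵀ * V) * diagonal lam * (Vᵀ * V) := by
          simp only [Matrix.mul_assoc]
      _ = _ := by rw [hVV, Matrix.one_mul, Matrix.mul_one]
  have hone : ∀ k, ∑ x : Σ j, Fin (ni j), p x.1 * W x.1 x.2 k ^ 2 = 1 := fun k => by
    have h := congrFun (congrFun hWW k) k
    rw [Fintype.sum_sigma, ← one_apply_eq k, ← h, Matrix.sum_apply]
    refine Finset.sum_congr rfl fun j _ => ?_
    simp [mul_apply, Finset.mul_sum, sq]
  have hlamk : ∀ k, ∑ x : Σ j, Fin (ni j), p x.1 * W x.1 x.2 k ^ 2 * a x.1 x.2 = lam k :=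
      fun k => by
    have h := congrFun (congrFun hWD k) k
    rw [Fintype.sum_sigma, ← diagonal_apply_eq lam k, ← h, Matrix.sum_apply]
    refine Finset.sum_congr rfl fun j _ => ?_
    rw [Matrix.smul_apply, mul_apply, smul_eq_mul, Finset.mul_sum]
    refine Finset.sum_congr rfl fun l _ => ?_
    rw [mul_diagonal, transpose_apply]
    ring
  have hjensen : ∀ k, ∑ x : Σ j, Fin (ni j), p x.1 * W x.1 x.2 k ^ 2 * Real.log (a x.1 x.2) ≤
      Real.log (lam k) := fun k => by
    rw [← hlamk k]
    exact sum_mul_log_le_log_sum (fun x => mul_nonneg (hp x.1).le (sq_nonneg _)) (hone k)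
      fun x => ha x.1 x.2
  -- The defect `1 - C Cᵀ` contributes a nonpositive amount because `A ≤ Q`.
  have hdefect : ∀ j, ∑ l, (1 - ∑ k, W j l k ^ 2) * Real.log (a j l) ≤ 0 := fun j => by
    set P := 1 - C j * (C j)ᵀ with hPdef
    have hdiag : ∀ l, ((U j)ᵀ * P * U j) l l = 1 - ∑ k, W j l k ^ 2 := fun l => by
      have h : (U j)ᵀ * P * U j = 1 - W j * (W j)ᵀ := by
        rw [hPdef, Matrix.mul_sub, Matrix.sub_mul, Matrix.mul_one, hUU j]
        congr 1
        calc (U j)ᵀ * (C j * (C j)ᵀ) * U j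
            = (U j)ᵀ * C j * (1 : Matrix (Fin n) (Fin n) ℝ) * ((C j)ᵀ * U j) := by
              simp only [Matrix.mul_assoc, Matrix.one_mul]
          _ = W j * (W j)ᵀ := by
              rw [← hVV']
              simp only [W, transpose_mul, transpose_transpose, Matrix.mul_assoc]
      rw [h, Matrix.sub_apply, one_apply_eq, mul_apply]
      simp [sq]
    have hpsd : ((U j)ᵀ * P * U j).PosSemidef := by
      have := (hP j).conjTranspose_mul_mul_same (U j)
      rwa [conjTranspose_eq_transpose_of_trivial] at this
    calc ∑ l, (1 - ∑ k, W j l k ^ 2) * Real.log (a j l)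
        ≤ ∑ l, (1 - ∑ k, W j l k ^ 2) * (a j l - 1) := by
          refine Finset.sum_le_sum fun l _ => mul_le_mul_of_nonneg_left
            (Real.log_le_sub_one_of_pos (ha j l)) ?_
          rw [← hdiag l]
          exact hpsd.diag_nonneg
      _ = ((U j)ᵀ * P * U j * (diagonal (a j) - 1)).trace := by
          rw [← diagonal_one, diagonal_sub]
          simp [trace, mul_diagonal, ← hdiag]
      _ = (P * (A j - 1)).trace := by
          rw [Matrix.mul_assoc, Matrix.mul_assoc, trace_mul_comm, Matrix.mul_assoc]
          congr 2
          rw [Matrix.mul_sub, Matrix.sub_mul, Matrix.mul_one, hUU' j, ← hAU j]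
      _ = -(P * (Q j - A j)).trace := by
          rw [← trace_neg, ← Matrix.mul_neg, ← sub_add_sub_cancel (A j) (Q j) 1, Matrix.mul_add,
            hPQ j, add_zero, neg_sub]
      _ ≤ 0 := neg_nonpos.mpr (trace_mul_nonneg_of_posSemidef (hP j) (hA j).2)
  rw [hNdet, Real.log_prod fun k _ => (hlam k).ne']
  refine le_trans ?_ (Finset.sum_le_sum fun k _ => hjensen k)
  simp_rw [Fintype.sum_sigma]
  rw [Finset.sum_comm]
  refine Finset.sum_le_sum fun j _ => ?_
  rw [hAdet j, Real.log_prod fun l _ => (ha j l).ne', Finset.sum_comm, Finset.mul_sum]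
  have h := mul_nonpos_of_nonneg_of_nonpos (hp j).le (hdefect j)
  rw [Finset.mul_sum] at h
  rw [← sub_nonpos, ← Finset.sum_sub_distrib]
  refine le_of_eq_of_le (Finset.sum_congr rfl fun l _ => ?_) h
  rw [← Finset.sum_mul, ← Finset.mul_sum]
  ring

/-- The logarithm of the Gaussian Brascamp–Lieb functional. -/
def logGaussianRatio {n m : ℕ} {ni : Fin m → ℕ} (C : ∀ j, Matrix (Fin (ni j)) (Fin n) ℝ)
    (p : Fin m → ℝ) (A : ∀ j, Matrix (Fin (ni j)) (Fin (ni j)) ℝ) : ℝ :=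
  ∑ j, p j * Real.log (A j).det - Real.log (∑ j, p j • ((C j)ᵀ * A j * C j)).det

theorem exp_logGaussianRatio {n m : ℕ} {ni : Fin m → ℕ}
    {C : ∀ j, Matrix (Fin (ni j)) (Fin n) ℝ} {p : Fin m → ℝ}
    {A : ∀ j, Matrix (Fin (ni j)) (Fin (ni j)) ℝ} (hA : ∀ j, (A j).PosDef)
    (hN : (∑ j, p j • ((C j)ᵀ * A j * C j)).PosDef) :
    Real.exp (logGaussianRatio C p A) =
      (∏ j, (A j).det ^ p j) / (∑ j, p j • ((C j)ᵀ * A j * C j)).det := by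
  rw [logGaussianRatio, Real.exp_sub, Real.exp_log hN.det_pos, Real.exp_sum]
  congr 1
  refine Finset.prod_congr rfl fun j _ => ?_
  rw [Real.rpow_def_of_pos (hA j).det_pos, mul_comm]

theorem ofReal_exp_logGaussianRatio {n m : ℕ} {ni : Fin m → ℕ}
    {C : ∀ j, Matrix (Fin (ni j)) (Fin n) ℝ} {p : Fin m → ℝ}
    {A : ∀ j, Matrix (Fin (ni j)) (Fin (ni j)) ℝ} (hA : ∀ j, (A j).PosDef)
    (hN : (∑ j, p j • ((C j)ᵀ * A j * C j)).PosDef) :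
    ENNReal.ofReal (Real.exp (logGaussianRatio C p A)) =
      (∏ j, ENNReal.ofReal (A j).det ^ p j) /
        ENNReal.ofReal (∑ j, p j • ((C j)ᵀ * A j * C j)).det := by
  rw [exp_logGaussianRatio hA hN, ENNReal.ofReal_div_of_pos hN.det_pos,
    ENNReal.ofReal_prod_of_nonneg fun j _ => Real.rpow_nonneg (hA j).det_pos.le _]
  congr 1
  refine Finset.prod_congr rfl fun j _ => ?_
  rw [ENNReal.ofReal_rpow_of_pos (hA j).det_pos]

theorem sq_BLconst_eq_iff_isMaxOn {n m : ℕ} {ni : Fin m → ℕ}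
    {C : ∀ j, Matrix (Fin (ni j)) (Fin n) ℝ}
    (hker : ∀ x : Fin n → ℝ, (∀ j, (C j).mulVec x = 0) → x = 0)
    {p : Fin m → ℝ} (hp : ∀ j, 0 < p j)
    {Q B : ∀ j, Matrix (Fin (ni j)) (Fin (ni j)) ℝ}
    (hB : ∀ j, (B j).PosDef ∧ (Q j - B j).PosSemidef) :
    (BLconst C p Q ^ (2 : ℕ) = (∏ j, ENNReal.ofReal ((B j).det) ^ p j) /
        ENNReal.ofReal (∑ j, p j • ((C j)ᵀ * B j * C j)).det) ↔
      ∀ A : ∀ j, Matrix (Fin (ni j)) (Fin (ni j)) ℝ,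
        (∀ j, (A j).PosDef ∧ (Q j - A j).PosSemidef) →
          logGaussianRatio C p A ≤ logGaussianRatio C p B := by
  have hval : ∀ A : ∀ j, Matrix (Fin (ni j)) (Fin (ni j)) ℝ,
      (∀ j, (A j).PosDef ∧ (Q j - A j).PosSemidef) →
      ENNReal.ofReal (Real.exp (logGaussianRatio C p A)) =
        (∏ j, ENNReal.ofReal (A j).det ^ p j) /
          ENNReal.ofReal (∑ j, p j • ((C j)ᵀ * A j * C j)).det := fun A hA =>
    ofReal_exp_logGaussianRatio (fun j => (hA j).1)
      (posDef_sum_smul_transpose_mul_mul hker hp fun j => (hA j).1)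
  have hle : ∀ A : ∀ j, Matrix (Fin (ni j)) (Fin (ni j)) ℝ,
      (∀ j, (A j).PosDef ∧ (Q j - A j).PosSemidef) →
      ENNReal.ofReal (Real.exp (logGaussianRatio C p A)) ≤ BLconst C p Q ^ (2 : ℕ) :=
      fun A hA => by
    have h : ENNReal.ofReal (Real.exp (logGaussianRatio C p A)) ^ (2 : ℝ)⁻¹ ≤ BLconst C p Q := by
      rw [hval A hA]
      exact le_iSup₂_of_le A hA le_rfl
    rw [← ENNReal.rpow_two]
    exact (ENNReal.rpow_inv_le_iff two_pos).mp h
  rw [← hval B hB]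
  constructor
  · intro h A hA
    have h1 := hle A hA
    rwa [h, ENNReal.ofReal_le_ofReal_iff (Real.exp_pos _).le, Real.exp_le_exp] at h1
  · intro h
    refine le_antisymm ?_ (hle B hB)
    rw [← ENNReal.rpow_two, ← ENNReal.le_rpow_inv_iff two_pos]
    refine iSup₂_le fun A hA => ?_
    rw [← hval A hA]
    exact ENNReal.rpow_le_rpow
      (ENNReal.ofReal_le_ofReal (Real.exp_le_exp.mpr (h A hA))) (by norm_num)

theorem hasDerivAt_log_det_add_smul {ι : Type*} [Fintype ι] [DecidableEq ι]
    {B : Matrix ι ι ℝ} (hB : B.PosDef) (H : Matrix ι ι ℝ) :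
    HasDerivAt (fun t : ℝ => Real.log (B + t • H).det) (B⁻¹ * H).trace 0 := by
  have hu : IsUnit B.det := hB.det_pos.ne'.isUnit
  have h : ∀ t : ℝ, (B + t • H).det = B.det * (1 + t • (B⁻¹ * H)).det := fun t => by
    rw [← det_mul, Matrix.mul_add, Matrix.mul_one, Matrix.mul_smul, ← Matrix.mul_assoc,
      mul_nonsing_inv _ hu, Matrix.one_mul]
  have hd : HasDerivAt (fun t : ℝ => (B + t • H).det) (B.det * (B⁻¹ * H).trace) 0 :=
    ((hasDerivAt_det_one_add_smul (B⁻¹ * H)).const_mul B.det).congr_of_eventuallyEq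
      (Filter.Eventually.of_forall h)
  refine (hd.log (by simpa using hB.det_pos.ne')).congr_deriv ?_
  simp [hB.det_pos.ne']

theorem hasDerivAt_logGaussianRatio {n m : ℕ} {ni : Fin m → ℕ}
    {C : ∀ j, Matrix (Fin (ni j)) (Fin n) ℝ} {p : Fin m → ℝ}
    {B : ∀ j, Matrix (Fin (ni j)) (Fin (ni j)) ℝ} (hB : ∀ j, (B j).PosDef)
    {M : Matrix (Fin n) (Fin n) ℝ} (hM : M = ∑ j, p j • ((C j)ᵀ * B j * C j)) (hMpos : M.PosDef)
    (H : ∀ j, Matrix (Fin (ni j)) (Fin (ni j)) ℝ) :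
    HasDerivAt (fun t : ℝ => logGaussianRatio C p (B + t • H))
      (∑ j, p j * (((B j)⁻¹ - C j * M⁻¹ * (C j)ᵀ) * H j).trace) 0 := by
  have h1 : HasDerivAt (fun t : ℝ => ∑ j, p j * Real.log (B j + t • H j).det)
      (∑ j, p j * ((B j)⁻¹ * H j).trace) 0 :=
    HasDerivAt.fun_sum fun j _ => (hasDerivAt_log_det_add_smul (hB j) (H j)).const_mul (p j)
  have h2 := hasDerivAt_log_det_add_smul hMpos (∑ j, p j • ((C j)ᵀ * H j * C j))
  have h3 : ∀ t : ℝ, M + t • ∑ j, p j • ((C j)ᵀ * H j * C j) =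
      ∑ j, p j • ((C j)ᵀ * (B j + t • H j) * C j) := fun t => by
    rw [hM, Finset.smul_sum, ← Finset.sum_add_distrib]
    refine Finset.sum_congr rfl fun j _ => ?_
    rw [Matrix.mul_add, Matrix.add_mul, smul_add, Matrix.mul_smul, Matrix.smul_mul,
      smul_comm t]
  simp_rw [h3] at h2
  refine (h1.sub h2).congr_deriv ?_
  rw [Finset.mul_sum, trace_sum, ← Finset.sum_sub_distrib]
  refine Finset.sum_congr rfl fun j _ => ?_
  rw [Matrix.mul_smul, trace_smul, smul_eq_mul, Matrix.sub_mul, trace_sub, mul_sub]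
  congr 2
  rw [← Matrix.mul_assoc, trace_mul_comm]
  simp only [Matrix.mul_assoc]

theorem eventually_posDef_sub_smul_vecMulVec {ι : Type*} [Fintype ι] [DecidableEq ι]
    {B : Matrix ι ι ℝ} (hB : B.PosDef) (v : ι → ℝ) :
    ∀ᶠ t in nhdsWithin (0 : ℝ) (Set.Ioi 0), (B - t • vecMulVec v v).PosDef := by
  obtain ⟨R, hR, rfl⟩ := hB.exists_posDef_mul_self
  have hRt : Rᵀ = R := by
    rw [← conjTranspose_eq_transpose_of_trivial, hR.isHermitian.eq]
  have hu : IsUnit R.det := hR.det_pos.ne'.isUnit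
  set w := R⁻¹ *ᵥ v with hw
  have hvw : R *ᵥ w = v := by rw [hw, mulVec_mulVec, mul_nonsing_inv _ hu, one_mulVec]
  have hsmall : ∀ᶠ t in nhdsWithin (0 : ℝ) (Set.Ioi 0), t * (w ⬝ᵥ w) < 1 := by
    have : Filter.Tendsto (fun t : ℝ => t * (w ⬝ᵥ w)) (nhds 0) (nhds (0 * (w ⬝ᵥ w))) :=
      Filter.tendsto_id.mul_const _
    rw [zero_mul] at this
    exact nhdsWithin_le_nhds (this.eventually (gt_mem_nhds one_pos))
  filter_upwards [hsmall, self_mem_nhdsWithin] with t ht ht0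
  refine PosDef.of_dotProduct_mulVec_pos
    (hB.isHermitian.sub (by simp [IsHermitian])) fun x hx => ?_
  have hpos : 0 < (R *ᵥ x) ⬝ᵥ (R *ᵥ x) := by
    have := hB.dotProduct_mulVec_pos hx
    rwa [star_trivial, ← mulVec_mulVec, dotProduct_mulVec, ← mulVec_transpose, hRt] at this
  have hcs : (w ⬝ᵥ (R *ᵥ x)) ^ 2 ≤ (w ⬝ᵥ w) * ((R *ᵥ x) ⬝ᵥ (R *ᵥ x)) := by
    simpa [dotProduct, sq] using Finset.sum_mul_sq_le_sq_mul_sq Finset.univ w (R *ᵥ x)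
  have hval : star x ⬝ᵥ ((R * R - t • vecMulVec v v) *ᵥ x) =
      (R *ᵥ x) ⬝ᵥ (R *ᵥ x) - t * (w ⬝ᵥ (R *ᵥ x)) ^ 2 := by
    have h1 : v ⬝ᵥ x = w ⬝ᵥ (R *ᵥ x) := by
      rw [dotProduct_mulVec, ← mulVec_transpose, hRt, hvw]
    rw [star_trivial, sub_mulVec, dotProduct_sub, ← mulVec_mulVec, dotProduct_mulVec,
      ← mulVec_transpose, hRt, smul_mulVec, dotProduct_smul, vecMulVec_mulVec, ← h1]
    simp [dotProduct_comm x v, sq]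
  rw [hval]
  have ht0' : 0 < t := ht0
  nlinarith [mul_le_mul_of_nonneg_left hcs ht0'.le, mul_pos (sub_pos.mpr ht) hpos]

theorem trace_mul_nonpos_of_isLocalMaxOn {n m : ℕ} {ni : Fin m → ℕ}
    {C : ∀ j, Matrix (Fin (ni j)) (Fin n) ℝ}
    (hker : ∀ x : Fin n → ℝ, (∀ j, (C j).mulVec x = 0) → x = 0)
    {p : Fin m → ℝ} (hp : ∀ j, 0 < p j)
    {Q B : ∀ j, Matrix (Fin (ni j)) (Fin (ni j)) ℝ}
    (hB : ∀ j, (B j).PosDef ∧ (Q j - B j).PosSemidef)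
    {M : Matrix (Fin n) (Fin n) ℝ} (hM : M = ∑ j, p j • ((C j)ᵀ * B j * C j))
    (hmax : IsLocalMaxOn
        (fun A : ∀ j, Matrix (Fin (ni j)) (Fin (ni j)) ℝ =>
          (∏ j, (A j).det ^ p j) / (∑ j, p j • ((C j)ᵀ * A j * C j)).det)
        {A | ∀ j, (A j).PosDef ∧ (Q j - A j).PosSemidef} B)
    (j : Fin m) {H : Matrix (Fin (ni j)) (Fin (ni j)) ℝ}
    (hH : ∀ᶠ t in nhdsWithin (0 : ℝ) (Set.Ioi 0),
      (B j + t • H).PosDef ∧ (Q j - (B j + t • H)).PosSemidef) :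
    (((B j)⁻¹ - C j * M⁻¹ * (C j)ᵀ) * H).trace ≤ 0 := by
  have hpd : ∀ {A : ∀ j, Matrix (Fin (ni j)) (Fin (ni j)) ℝ},
      (∀ j, (A j).PosDef ∧ (Q j - A j).PosSemidef) →
      (∑ j, p j • ((C j)ᵀ * A j * C j)).PosDef := fun hA =>
    posDef_sum_smul_transpose_mul_mul hker hp fun j => (hA j).1
  have hMpos : M.PosDef := hM ▸ hpd hB
  let K : ∀ i, Matrix (Fin (ni i)) (Fin (ni i)) ℝ := Pi.single j H
  have hfeas : ∀ᶠ t in nhdsWithin (0 : ℝ) (Set.Ioi 0),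
      ∀ i, ((B + t • K) i).PosDef ∧ (Q i - (B + t • K) i).PosSemidef := by
    filter_upwards [hH] with t ht i
    by_cases hij : i = j
    · subst hij
      simpa [K] using ht
    · simpa [K, Pi.single_eq_of_ne hij] using hB i
  have hcont : Filter.Tendsto (fun t : ℝ => B + t • K) (nhdsWithin 0 (Set.Ioi 0)) (nhds B) := by
    have : Continuous fun t : ℝ => B + t • K := by fun_prop
    simpa using (this.tendsto 0).mono_left nhdsWithin_le_nhds
  have hev := (tendsto_nhdsWithin_of_tendsto_nhds_of_eventually_within
    (s := {A : ∀ j, Matrix (Fin (ni j)) (Fin (ni j)) ℝ |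
      ∀ j, (A j).PosDef ∧ (Q j - A j).PosSemidef}) _ hcont hfeas).eventually hmax
  have hlog : ∀ᶠ t in nhdsWithin (0 : ℝ) (Set.Ioi 0),
      logGaussianRatio C p (B + t • K) ≤ logGaussianRatio C p (B + (0 : ℝ) • K) := by
    filter_upwards [hev, hfeas] with t h1 h2
    rw [zero_smul, add_zero, ← Real.exp_le_exp,
      exp_logGaussianRatio (fun i => (h2 i).1) (hpd h2),
      exp_logGaussianRatio (fun i => (hB i).1) (hpd hB)]
    exact h1
  have hd := (hasDerivAt_logGaussianRatio (fun i => (hB i).1) hM hMpos K).nonpos_of_eventually_le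
    hlog
  rw [Finset.sum_eq_single j (fun i _ hij => by simp [K, Pi.single_eq_of_ne hij])
    (fun h => absurd (Finset.mem_univ j) h)] at hd
  have hKj : K j = H := by simp [K]
  rw [hKj] at hd
  exact nonpos_of_mul_nonpos_right hd (hp j)

theorem eulerLagrange_of_isLocalMaxOn {n m : ℕ} {ni : Fin m → ℕ}
    {C : ∀ j, Matrix (Fin (ni j)) (Fin n) ℝ}
    (hker : ∀ x : Fin n → ℝ, (∀ j, (C j).mulVec x = 0) → x = 0)
    {p : Fin m → ℝ} (hp : ∀ j, 0 < p j)
    {Q B : ∀ j, Matrix (Fin (ni j)) (Fin (ni j)) ℝ}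
    (hB : ∀ j, (B j).PosDef ∧ (Q j - B j).PosSemidef)
    {M : Matrix (Fin n) (Fin n) ℝ} (hM : M = ∑ j, p j • ((C j)ᵀ * B j * C j))
    (hmax : IsLocalMaxOn
        (fun A : ∀ j, Matrix (Fin (ni j)) (Fin (ni j)) ℝ =>
          (∏ j, (A j).det ^ p j) / (∑ j, p j • ((C j)ᵀ * A j * C j)).det)
        {A | ∀ j, (A j).PosDef ∧ (Q j - A j).PosSemidef} B) (j : Fin m) :
    ((B j)⁻¹ - C j * M⁻¹ * (C j)ᵀ).PosSemidef ∧
      ((B j)⁻¹ - C j * M⁻¹ * (C j)ᵀ) * (Q j - B j) = 0 := by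
  have hMpos : M.PosDef :=
    hM ▸ posDef_sum_smul_transpose_mul_mul hker hp fun j => (hB j).1
  have hvar := fun {H} => trace_mul_nonpos_of_isLocalMaxOn (H := H) hker hp hB hM hmax j
  have hherm : ((B j)⁻¹ - C j * M⁻¹ * (C j)ᵀ).IsHermitian := by
    refine (hB j).1.inv.isHermitian.sub ?_
    have := (hMpos.inv.posSemidef.mul_mul_conjTranspose_same (C j)).isHermitian
    rwa [conjTranspose_eq_transpose_of_trivial] at this
  have hpsd : ((B j)⁻¹ - C j * M⁻¹ * (C j)ᵀ).PosSemidef := by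
    refine PosSemidef.of_dotProduct_mulVec_nonneg hherm fun v => ?_
    have hvv : (vecMulVec v v).PosSemidef := by
      simpa using posSemidef_vecMulVec_self_star v
    have h : (((B j)⁻¹ - C j * M⁻¹ * (C j)ᵀ) * -vecMulVec v v).trace ≤ 0 := by
      refine hvar ?_
      filter_upwards [eventually_posDef_sub_smul_vecMulVec (hB j).1 v, self_mem_nhdsWithin]
        with t h1 h2
      rw [smul_neg, ← sub_eq_add_neg]
      refine ⟨h1, ?_⟩
      rw [← sub_add]
      exact (hB j).2.add (hvv.smul (le_of_lt h2))
    rw [Matrix.mul_neg, trace_neg, mul_vecMulVec, trace_vecMulVec, dotProduct_comm] at h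
    rw [star_trivial]
    linarith
  refine ⟨hpsd, mul_eq_zero_of_posSemidef_of_trace_mul_eq_zero hpsd (hB j).2
    (le_antisymm (hvar ?_) (trace_mul_nonneg_of_posSemidef hpsd (hB j).2))⟩
  have hlt : ∀ᶠ t in nhdsWithin (0 : ℝ) (Set.Ioi 0), t < 1 :=
    nhdsWithin_le_nhds (gt_mem_nhds one_pos)
  filter_upwards [hlt, self_mem_nhdsWithin] with t h1 h2
  refine ⟨(hB j).1.add_posSemidef ((hB j).2.smul (le_of_lt h2)), ?_⟩
  have h : Q j - (B j + t • (Q j - B j)) = (1 - t) • (Q j - B j) := by module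
  rw [h]
  exact (hB j).2.smul (sub_nonneg.mpr h1.le)

theorem exists_geometricDatum_of_eulerLagrange {n m : ℕ} {ni : Fin m → ℕ}
    {C : ∀ j, Matrix (Fin (ni j)) (Fin n) ℝ} {p : Fin m → ℝ}
    {Q B : ∀ j, Matrix (Fin (ni j)) (Fin (ni j)) ℝ}
    (hB : ∀ j, (B j).PosDef ∧ (Q j - B j).PosSemidef)
    {M : Matrix (Fin n) (Fin n) ℝ} (hM : M = ∑ j, p j • ((C j)ᵀ * B j * C j)) (hMpos : M.PosDef)
    (hEL : ∀ j, ((B j)⁻¹ - C j * M⁻¹ * (C j)ᵀ).PosSemidef ∧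
      ((B j)⁻¹ - C j * M⁻¹ * (C j)ᵀ) * (Q j - B j) = 0) :
    ∃ (Bh : ∀ j, Matrix (Fin (ni j)) (Fin (ni j)) ℝ) (Mh : Matrix (Fin n) (Fin n) ℝ),
      (∀ j, (Bh j).PosDef ∧ Bh j * Bh j = B j) ∧ Mh.PosDef ∧ Mh * Mh = M⁻¹ ∧
        GeometricDatum (fun j => Bh j * C j * Mh) p (fun j => (Bh j)⁻¹ * Q j * (Bh j)⁻¹) := by
  choose R hR hRR using fun j => (hB j).1.exists_posDef_mul_self
  obtain ⟨S, hS, hSS⟩ := hMpos.inv.exists_posDef_mul_self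
  have hRt : ∀ j, (R j)ᵀ = R j := fun j => by
    rw [← conjTranspose_eq_transpose_of_trivial, (hR j).isHermitian.eq]
  have hSt : Sᵀ = S := by
    rw [← conjTranspose_eq_transpose_of_trivial, hS.isHermitian.eq]
  have hRu : ∀ j, IsUnit (R j).det := fun j => (hR j).det_pos.ne'.isUnit
  have hSu : IsUnit S.det := hS.det_pos.ne'.isUnit
  have hdef : ∀ j, 1 - R j * C j * S * (R j * C j * S)ᵀ =
      R j * ((B j)⁻¹ - C j * M⁻¹ * (C j)ᵀ) * R j := fun j => by
    rw [Matrix.mul_sub, Matrix.sub_mul, ← hSS, ← hRR j, Matrix.mul_inv_rev, ← Matrix.mul_assoc,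
      mul_nonsing_inv _ (hRu j), Matrix.one_mul, nonsing_inv_mul _ (hRu j)]
    simp only [transpose_mul, hRt, hSt, Matrix.mul_assoc]
  have hQdef : ∀ j, (R j)⁻¹ * Q j * (R j)⁻¹ - 1 = (R j)⁻¹ * (Q j - B j) * (R j)⁻¹ := fun j => by
    rw [Matrix.mul_sub, Matrix.sub_mul, ← hRR j, ← Matrix.mul_assoc,
      nonsing_inv_mul _ (hRu j), Matrix.one_mul, mul_nonsing_inv _ (hRu j)]
  refine ⟨R, S, fun j => ⟨hR j, hRR j⟩, hS, hSS, fun j => ?_, fun j => ?_, fun j => ?_, ?_⟩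
  · simp only [hdef]
    have := (hEL j).1.conjTranspose_mul_mul_same (R j)
    rwa [(hR j).isHermitian.eq] at this
  · simp only [hQdef]
    have := (hB j).2.conjTranspose_mul_mul_same (R j)⁻¹
    rwa [(hR j).inv.isHermitian.eq] at this
  · simp only [hdef, hQdef]
    calc R j * ((B j)⁻¹ - C j * M⁻¹ * (C j)ᵀ) * R j * ((R j)⁻¹ * (Q j - B j) * (R j)⁻¹)
        = R j * ((B j)⁻¹ - C j * M⁻¹ * (C j)ᵀ) * (R j * (R j)⁻¹) * (Q j - B j) * (R j)⁻¹ := by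
          simp only [Matrix.mul_assoc]
      _ = R j * (((B j)⁻¹ - C j * M⁻¹ * (C j)ᵀ) * (Q j - B j)) * (R j)⁻¹ := by
          rw [mul_nonsing_inv _ (hRu j), Matrix.mul_one]
          simp only [Matrix.mul_assoc]
      _ = 0 := by rw [(hEL j).2, Matrix.mul_zero, Matrix.zero_mul]
  · have h : ∀ j, p j • ((R j * C j * S)ᵀ * (R j * C j * S)) =
        S * (p j • ((C j)ᵀ * B j * C j)) * S := fun j => by
      rw [Matrix.mul_smul, Matrix.smul_mul, ← hRR j]
      simp only [transpose_mul, hRt, hSt, Matrix.mul_assoc]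
    rw [Finset.sum_congr rfl fun j _ => h j, ← Finset.sum_mul, ← Finset.mul_sum, ← hM]
    have hMS : M = S⁻¹ * S⁻¹ := by
      rw [← Matrix.mul_inv_rev, hSS, nonsing_inv_nonsing_inv _ hMpos.det_pos.ne'.isUnit]
    rw [hMS, ← Matrix.mul_assoc, mul_nonsing_inv _ hSu, Matrix.one_mul, nonsing_inv_mul _ hSu]

theorem logGaussianRatio_le_of_geometricDatum {n m : ℕ} {ni : Fin m → ℕ}
    {C : ∀ j, Matrix (Fin (ni j)) (Fin n) ℝ}
    (hker : ∀ x : Fin n → ℝ, (∀ j, (C j).mulVec x = 0) → x = 0)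
    {p : Fin m → ℝ} (hp : ∀ j, 0 < p j)
    {Q B R : ∀ j, Matrix (Fin (ni j)) (Fin (ni j)) ℝ}
    {M S : Matrix (Fin n) (Fin n) ℝ} (hM : M = ∑ j, p j • ((C j)ᵀ * B j * C j))
    (hMpos : M.PosDef) (hR : ∀ j, (R j).PosDef ∧ R j * R j = B j) (hS : S.PosDef)
    (hSS : S * S = M⁻¹)
    (hG : GeometricDatum (fun j => R j * C j * S) p (fun j => (R j)⁻¹ * Q j * (R j)⁻¹))
    {A : ∀ j, Matrix (Fin (ni j)) (Fin (ni j)) ℝ}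
    (hA : ∀ j, (A j).PosDef ∧ (Q j - A j).PosSemidef) :
    logGaussianRatio C p A ≤ logGaussianRatio C p B := by
  have hRt : ∀ j, (R j)ᵀ = R j := fun j => by
    rw [← conjTranspose_eq_transpose_of_trivial, (hR j).1.isHermitian.eq]
  have hSt : Sᵀ = S := by
    rw [← conjTranspose_eq_transpose_of_trivial, hS.isHermitian.eq]
  have hRu : ∀ j, IsUnit (R j).det := fun j => (hR j).1.det_pos.ne'.isUnit
  have hN := posDef_sum_smul_transpose_mul_mul hker hp fun j => (hA j).1
  set N := ∑ j, p j • ((C j)ᵀ * A j * C j) with hNdef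
  have hA' : ∀ j, ((R j)⁻¹ * A j * (R j)⁻¹).PosDef ∧
      ((R j)⁻¹ * Q j * (R j)⁻¹ - (R j)⁻¹ * A j * (R j)⁻¹).PosSemidef := fun j => by
    have hinv := (hR j).1.inv
    refine ⟨?_, ?_⟩
    · have h := (IsUnit.posDef_star_left_conjugate_iff (x := A j) hinv.isUnit).mpr (hA j).1
      rwa [star_eq_conjTranspose, hinv.isHermitian.eq] at h
    · have h := (hA j).2.conjTranspose_mul_mul_same (R j)⁻¹
      rwa [hinv.isHermitian.eq, Matrix.mul_sub, Matrix.sub_mul] at h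
  have hsum : ∑ j, p j • ((R j * C j * S)ᵀ * ((R j)⁻¹ * A j * (R j)⁻¹) * (R j * C j * S)) =
      S * N * S := by
    rw [hNdef, Finset.mul_sum, Finset.sum_mul]
    refine Finset.sum_congr rfl fun j _ => ?_
    rw [Matrix.mul_smul, Matrix.smul_mul]
    congr 1
    calc (R j * C j * S)ᵀ * ((R j)⁻¹ * A j * (R j)⁻¹) * (R j * C j * S)
        = S * (C j)ᵀ * (R j * (R j)⁻¹) * A j * ((R j)⁻¹ * R j) * C j * S := by
          simp only [transpose_mul, hRt, hSt, Matrix.mul_assoc]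
      _ = _ := by
          rw [mul_nonsing_inv _ (hRu j), nonsing_inv_mul _ (hRu j), Matrix.mul_one,
            Matrix.mul_one]
          simp only [Matrix.mul_assoc]
  have hSNS : (S * N * S).PosDef := by
    have h := (IsUnit.posDef_star_left_conjugate_iff (x := N) hS.isUnit).mpr hN
    rwa [star_eq_conjTranspose, hS.isHermitian.eq] at h
  have hmain := hG.sum_mul_log_det_le hp hA' (hsum ▸ hSNS)
  rw [hsum] at hmain
  have hdetN : Real.log (S * N * S).det = Real.log N.det - Real.log M.det := by
    have hdet : (S * N * S).det = N.det * M.det⁻¹ := by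
      have h : S.det * S.det = M.det⁻¹ := by
        rw [← det_mul, hSS, det_nonsing_inv, Ring.inverse_eq_inv']
      rw [det_mul, det_mul, ← h]
      ring
    rw [hdet, Real.log_mul hN.det_pos.ne' (inv_ne_zero hMpos.det_pos.ne'), Real.log_inv,
      sub_eq_add_neg]
  have hdetA : ∀ j, Real.log ((R j)⁻¹ * A j * (R j)⁻¹).det =
      Real.log (A j).det - Real.log (B j).det := fun j => by
    have hRne := (hR j).1.det_pos.ne'
    rw [← (hR j).2, det_mul, det_mul, det_mul, det_nonsing_inv, Ring.inverse_eq_inv',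
      Real.log_mul (mul_ne_zero (inv_ne_zero hRne) (hA j).1.det_pos.ne') (inv_ne_zero hRne),
      Real.log_mul (inv_ne_zero hRne) (hA j).1.det_pos.ne', Real.log_mul hRne hRne, Real.log_inv]
    ring
  simp_rw [hdetA, mul_sub, Finset.sum_sub_distrib] at hmain
  rw [hdetN] at hmain
  rw [logGaussianRatio, logGaussianRatio, ← hM, ← hNdef]
  linarith

/-- Characterization of the Gaussian extremizers of a regularized Brascamp–Lieb
datum: global extremizers, local extremizers, the Euler–Lagrange equations, and
equivalence to a generalized geometric datum all coincide. -/
theorem gaussian_extremizer_characterization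
    {n m : ℕ} (hm : 1 ≤ m) {ni : Fin m → ℕ}
    (C : ∀ j, Matrix (Fin (ni j)) (Fin n) ℝ)
    (hCsurj : ∀ j, Function.Surjective (C j).mulVec)
    (hker : ∀ x : Fin n → ℝ, (∀ j, (C j).mulVec x = 0) → x = 0)
    (p : Fin m → ℝ) (hp : ∀ j, 0 < p j)
    (Q : ∀ j, Matrix (Fin (ni j)) (Fin (ni j)) ℝ) (hQ : ∀ j, (Q j).PosDef)
    (B : ∀ j, Matrix (Fin (ni j)) (Fin (ni j)) ℝ)
    (hB : ∀ j, (B j).PosDef ∧ (Q j - B j).PosSemidef)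
    (M : Matrix (Fin n) (Fin n) ℝ)
    (hM : M = ∑ j, p j • ((C j)ᵀ * B j * C j)) :
    M.PosDef ∧
    -- (a) ↔ (b)
    ((BLconst C p Q ^ (2 : ℕ) =
        (∏ j, ENNReal.ofReal ((B j).det) ^ p j) / ENNReal.ofReal M.det) ↔
      IsLocalMaxOn
        (fun A : ∀ j, Matrix (Fin (ni j)) (Fin (ni j)) ℝ =>
          (∏ j, (A j).det ^ p j) / (∑ j, p j • ((C j)ᵀ * A j * C j)).det)
        {A | ∀ j, (A j).PosDef ∧ (Q j - A j).PosSemidef} B) ∧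
    -- (a) ↔ (c)
    ((BLconst C p Q ^ (2 : ℕ) =
        (∏ j, ENNReal.ofReal ((B j).det) ^ p j) / ENNReal.ofReal M.det) ↔
      ∀ j, ((B j)⁻¹ - C j * M⁻¹ * (C j)ᵀ).PosSemidef ∧
        ((B j)⁻¹ - C j * M⁻¹ * (C j)ᵀ) * (Q j - B j) = 0) ∧
    -- (a) ↔ (d)
    ((BLconst C p Q ^ (2 : ℕ) =
        (∏ j, ENNReal.ofReal ((B j).det) ^ p j) / ENNReal.ofReal M.det) ↔
      ∃ (Bh : ∀ j, Matrix (Fin (ni j)) (Fin (ni j)) ℝ) (Mh : Matrix (Fin n) (Fin n) ℝ),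
        (∀ j, (Bh j).PosDef ∧ Bh j * Bh j = B j) ∧ Mh.PosDef ∧ Mh * Mh = M⁻¹ ∧
          GeometricDatum (fun j => Bh j * C j * Mh) p
            (fun j => (Bh j)⁻¹ * Q j * (Bh j)⁻¹)) := by
  have hMpos : M.PosDef :=
    hM ▸ posDef_sum_smul_transpose_mul_mul hker hp fun j => (hB j).1
  have hglobal := sq_BLconst_eq_iff_isMaxOn hker hp hB
  rw [← hM] at hglobal
  have hab : (∀ A : ∀ j, Matrix (Fin (ni j)) (Fin (ni j)) ℝ,
      (∀ j, (A j).PosDef ∧ (Q j - A j).PosSemidef) →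
        logGaussianRatio C p A ≤ logGaussianRatio C p B) →
      IsLocalMaxOn
        (fun A : ∀ j, Matrix (Fin (ni j)) (Fin (ni j)) ℝ =>
          (∏ j, (A j).det ^ p j) / (∑ j, p j • ((C j)ᵀ * A j * C j)).det)
        {A | ∀ j, (A j).PosDef ∧ (Q j - A j).PosSemidef} B := fun h => by
    refine IsMaxOn.localize fun A hA => ?_
    have h1 := Real.exp_le_exp.mpr (h A hA)
    rwa [exp_logGaussianRatio (fun j => (hA j).1)
        (posDef_sum_smul_transpose_mul_mul hker hp fun j => (hA j).1),
      exp_logGaussianRatio (fun j => (hB j).1)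
        (posDef_sum_smul_transpose_mul_mul hker hp fun j => (hB j).1)] at h1
  have hbc := eulerLagrange_of_isLocalMaxOn hker hp hB hM
  have hcd := exists_geometricDatum_of_eulerLagrange hB hM hMpos
  rw [hglobal]
  refine ⟨hMpos, ⟨hab, fun h => ?_⟩, ⟨fun h => hbc (hab h), fun h => ?_⟩,
    ⟨fun h => hcd (hbc (hab h)), ?_⟩⟩
  · obtain ⟨R, S, hR, hS, hSS, hG⟩ := hcd (hbc h)
    exact fun A hA => logGaussianRatio_le_of_geometricDatum hker hp hM hMpos hR hS hSS hG hA
  · obtain ⟨R, S, hR, hS, hSS, hG⟩ := hcd h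
    exact fun A hA => logGaussianRatio_le_of_geometricDatum hker hp hM hMpos hR hS hSS hG hA
  · rintro ⟨R, S, hR, hS, hSS, hG⟩
    exact fun A hA => logGaussianRatio_le_of_geometricDatum hker hp hM hMpos hR hS hSS hG hA
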